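/- Let p ≥ 3 be a prime. Then there exists a set of p−1 mutually orthogonal binary frequency squares of order 2p, i.e., a (p−1)-MOFS(2p;2). -/

import Mathlib

/-- An `m × n` frequency rectangle on `q` symbols: each symbol appears exactly
`n/q` times in each row and `m/q` times in each column. -/
def IsFreqRect (m n q : ℕ) (F : Fin m → Fin n → Fin q) : Prop :=
  (∀ i : Fin m, ∀ s : Fin q,
      ((Finset.univ : Finset (Fin n)).filter (fun j => F i j = s)).card * q = n) ∧
  (∀ j : Fin n, ∀ s : Fin q,
      ((Finset.univ : Finset (Fin m)).filter (fun i => F i j = s)).card * q = m)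

/-- Two frequency rectangles are orthogonal: upon superimposition each ordered
pair of symbols appears exactly `m*n/q^2` times. -/
def OrthogonalFR (m n q : ℕ) (F G : Fin m → Fin n → Fin q) : Prop :=
  ∀ a b : Fin q,
    ((Finset.univ : Finset (Fin m × Fin n)).filter
        (fun p => F p.1 p.2 = a ∧ G p.1 p.2 = b)).card * q ^ 2 = m * n

/-- A `k`-MOFR`(m,n;q)`: a family of `k` frequency rectangles, pairwise orthogonal. -/
def IsMOFR (m n q k : ℕ) (F : Fin k → Fin m → Fin n → Fin q) : Prop :=
  (∀ i, IsFreqRect m n q (F i)) ∧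
  (∀ i j, i ≠ j → OrthogonalFR m n q (F i) (F j))

/-- An orthogonal array OA`(N,k,q,t)`. -/
def IsOA (N k q t : ℕ) (A : Fin N → Fin k → Fin q) : Prop :=
  ∀ c : Fin t → Fin k, Function.Injective c →
    ∀ y : Fin t → Fin q,
      ((Finset.univ : Finset (Fin N)).filter (fun r => ∀ s, A r (c s) = y s)).card * q ^ t = N

/-- A family of frequency rectangles is `t`-orthogonal: superimposing any `t` of
them, each ordered `t`-tuple of symbols occurs exactly `m*n/q^t` times. -/
def IsTOrthogonal (m n q t k : ℕ) (F : Fin k → Fin m → Fin n → Fin q) : Prop :=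
  ∀ c : Fin t → Fin k, Function.Injective c →
    ∀ y : Fin t → Fin q,
      ((Finset.univ : Finset (Fin m × Fin n)).filter
          (fun p => ∀ s, F (c s) p.1 p.2 = y s)).card * q ^ t = m * n

/-- A Hadamard matrix of order `n` (entries `±1`, `H Hᵀ = n I`). -/
def IsHadamard (n : ℕ) (H : Matrix (Fin n) (Fin n) ℤ) : Prop :=
  (∀ i j, H i j = 1 ∨ H i j = -1) ∧
  H * H.transpose = (n : ℤ) • (1 : Matrix (Fin n) (Fin n) ℤ)

namespace MofsAux

open Finset

variable {p : ℕ}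

/-- Sign attached to an element of `Fin 2`. -/
def sg (e : Fin 2) : ℤ := if e = 0 then 1 else -1

/-- coefficient of `e` -/
def bb (g : ZMod p → ℤ) (k i j : ZMod p) : ℤ :=
  if i = 1 then (if j = 0 then g (-k) else if j = k then - g (-k) else 0) else 0

/-- coefficient of `f` -/
def cc (g : ZMod p → ℤ) (k i j : ZMod p) : ℤ :=
  if j = 0 then 0 else if i = 0 then (if g (j - k) = -1 then -1 else 0)
  else if i = 1 then (if g (j - k) = -1 then 1 else 0) else 0

/-- coefficient of `e * f` -/
def dd (g : ZMod p → ℤ) (k i j : ZMod p) : ℤ :=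
  if i = 0 then (if j = 0 then 1 else if g (j - k) = -1 then 0 else 1)
  else if i = 1 then
    (if j = 0 then 0 else if j = k then 0 else if g (j - k) = -1 then 0 else 1)
  else g (j - k * i)

/-- The signed square. -/
def V (g : ZMod p → ℤ) (k : ZMod p) (x y : ZMod p × Fin 2) : ℤ :=
  bb g k x.1 y.1 * sg x.2 + cc g k x.1 y.1 * sg y.2 + dd g k x.1 y.1 * (sg x.2 * sg y.2)

theorem exists_g (h3 : 3 ≤ p) (hodd : Odd p) : ∃ g : ZMod p → ℤ,
    (∀ x, g x = 1 ∨ g x = -1) ∧ g 0 = 1 ∧ ∀ x, x ≠ 0 → g (-x) = - g x := by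
  have : NeZero p := ⟨by omega⟩
  refine ⟨fun x => if x.val ≤ p / 2 then 1 else -1, fun x => ?_, ?_, fun x hx => ?_⟩
  · by_cases h : x.val ≤ p / 2 <;> simp [h]
  · simp
  · have h1 : (-x).val = p - x.val := by rw [ZMod.neg_val, if_neg hx]
    have h2 : x.val < p := ZMod.val_lt x
    obtain ⟨m, hm⟩ := hodd
    have h0 : x.val ≠ 0 := by simpa [ZMod.val_eq_zero] using hx
    simp only [h1]
    by_cases h : x.val ≤ p / 2
    · rw [if_pos h, if_neg (by omega)]
    · rw [if_neg h, if_pos (by omega)]; norm_num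

section
variable [Fact p.Prime] {g : ZMod p → ℤ}

theorem sum_g (h0 : g 0 = 1) (hn : ∀ x, x ≠ 0 → g (-x) = - g x)
    : ∑ x, g x = 1 := by
  have h1 : ∑ x, g (-x) = ∑ x, g x := Equiv.sum_comp (Equiv.neg (ZMod p)) g
  have h2 : ∑ x, (g x + g (-x)) = ∑ x : ZMod p, if x = 0 then 2 else 0 := by
    refine Finset.sum_congr rfl fun x _ => ?_
    by_cases h : x = 0
    · subst h; simp [h0]
    · simp [h, hn x h]
  rw [Finset.sum_add_distrib, h1] at h2
  simp at h2
  linarith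

theorem sum_slopes (h0 : g 0 = 1) (hn : ∀ x, x ≠ 0 → g (-x) = - g x)
    {k l : ZMod p} (hkl : k ≠ l) :
    ∑ i, ∑ j, g (j - k * i) * g (j - l * i) = 1 := by
  have h1 : ∀ i, ∑ j, g (j - k * i) * g (j - l * i) = ∑ j, g j * g (j + (k - l) * i) := by
    intro i
    rw [← Equiv.sum_comp (Equiv.addRight (k * i))]
    refine Finset.sum_congr rfl fun j _ => ?_
    simp only [Equiv.coe_addRight]
    congr 2 <;> ring
  simp_rw [h1]
  rw [Finset.sum_comm]
  have h2 : ∀ j, ∑ i, g j * g (j + (k - l) * i) = g j := by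
    intro j
    rw [← Finset.mul_sum]
    have := Equiv.sum_comp ((Equiv.mulLeft₀ (k - l) (sub_ne_zero.2 hkl)).trans (Equiv.addLeft j)) g
    have h3 : ∑ i, g (j + (k - l) * i) = ∑ i, g i := this
    rw [h3, sum_g h0 hn, mul_one]
  simp_rw [h2]
  exact sum_g h0 hn

theorem cell (hg : ∀ x, g x = 1 ∨ g x = -1) (h0 : g 0 = 1)
    {k l : ZMod p} (hk : k ≠ 0) (hl : l ≠ 0) (hkl : k ≠ l) (i j : ZMod p) :
    2 * (bb g k i j * bb g l i j + cc g k i j * cc g l i j + dd g k i j * dd g l i j) =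
      2 * (g (j - k * i) * g (j - l * i))
      + (if i = 0 then (g (j - k) * g (j - l) - 1
          + (if j = 0 then 1 - g (-k) * g (-l) else 0)) else 0)
      + (if i = 1 then (1 - g (j - k) * g (j - l)
          - (if j = k then 1 + g (k - l) else 0) - (if j = l then 1 + g (l - k) else 0)
          + (if j = 0 then g (-k) * g (-l) - 1 else 0)) else 0) := by
  have hlk : l ≠ k := hkl.symm
  have hk' := hk.symm
  have hl' := hl.symm
  by_cases hi0 : i = 0
  · subst hi0
    by_cases hj : j = 0
    · subst hj; simp [bb, cc, dd, h0]
    · rcases hg (j - k) with h | h <;> rcases hg (j - l) with h' | h' <;>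
        simp [bb, cc, dd, hj, h, h', h0] <;> rcases hg j with h'' | h'' <;> simp [h'']
  by_cases hi1 : i = 1
  · subst hi1
    by_cases hj : j = 0
    · subst hj; simp [bb, cc, dd, hk', hl']; try ring
    · by_cases hjk : j = k
      · subst hjk
        rcases hg (j - l) with h' | h' <;> simp [bb, cc, dd, hj, hkl, h', h0]
      · by_cases hjl : j = l
        · subst hjl
          rcases hg (j - k) with h' | h' <;> simp [bb, cc, dd, hj, hjk, h', h0]
        · rcases hg (j - k) with h | h <;> rcases hg (j - l) with h' | h' <;>
            simp [bb, cc, dd, hj, h, h', hjk, hjl]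
  · simp [bb, cc, dd, hi0, hi1]

theorem inner_zero (hg : ∀ x, g x = 1 ∨ g x = -1) (h0 : g 0 = 1) (hn : ∀ x, x ≠ 0 → g (-x) = - g x)
    {k l : ZMod p} (hk : k ≠ 0) (hl : l ≠ 0) (hkl : k ≠ l) :
    ∑ i, ∑ j, (bb g k i j * bb g l i j + cc g k i j * cc g l i j + dd g k i j * dd g l i j)
      = 0 := by
  have h : 2 * ∑ i, ∑ j, (bb g k i j * bb g l i j + cc g k i j * cc g l i j
      + dd g k i j * dd g l i j) = 0 := by
    simp_rw [Finset.mul_sum, cell hg h0 hk hl hkl, Finset.sum_add_distrib, ← Finset.mul_sum,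
      sum_slopes h0 hn hkl]
    rw [Finset.sum_comm (f := fun i j => if i = 0 then _ else _),
      Finset.sum_comm (f := fun i j => if i = 1 then _ else _)]
    simp only [Finset.sum_ite_eq', Finset.mem_univ, if_true, Finset.sum_add_distrib,
      Finset.sum_sub_distrib]
    have := hn (k - l) (sub_ne_zero.2 hkl)
    rw [neg_sub] at this
    rw [this]
    ring
  linarith

theorem row_b {k : ZMod p} (hk : k ≠ 0) (i : ZMod p) : ∑ j, bb g k i j = 0 := by
  by_cases hi : i = 1
  · have : ∀ j, bb g k i j = (if j = 0 then g (-k) else 0) + (if j = k then - g (-k) else 0) := by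
      intro j
      by_cases hj : j = 0
      · subst hj; simp [bb, hi, hk.symm]
      · simp [bb, hi, hj]
    simp_rw [this, Finset.sum_add_distrib]
    simp
  · simp [bb, hi]

theorem col_c {k : ZMod p} (j : ZMod p) : ∑ i, cc g k i j = 0 := by
  by_cases hj : j = 0
  · simp [cc, hj]
  · have : ∀ i, cc g k i j = (if i = 0 then (if g (j - k) = -1 then -1 else 0) else 0)
        + (if i = 1 then (if g (j - k) = -1 then 1 else 0) else 0) := by
      intro i
      by_cases hi : i = 0
      · subst hi; simp [cc, hj]
      · simp [cc, hi, hj]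
    simp_rw [this, Finset.sum_add_distrib]
    simp
    split_ifs <;> simp

theorem V_pm (hg : ∀ x, g x = 1 ∨ g x = -1) (h0 : g 0 = 1)
    {k : ZMod p} (x y : ZMod p × Fin 2) :
    V g k x y = 1 ∨ V g k x y = -1 := by
  obtain ⟨i, e⟩ := x
  obtain ⟨j, f⟩ := y
  have he : sg e = 1 ∨ sg e = -1 := by unfold sg; split_ifs <;> simp
  have hf : sg f = 1 ∨ sg f = -1 := by unfold sg; split_ifs <;> simp
  have key : (∃ s : ℤ, (s = 1 ∨ s = -1) ∧
      ((bb g k i j = s ∧ cc g k i j = 0 ∧ dd g k i j = 0) ∨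
       (bb g k i j = 0 ∧ cc g k i j = s ∧ dd g k i j = 0) ∨
       (bb g k i j = 0 ∧ cc g k i j = 0 ∧ dd g k i j = s))) := by
    by_cases hi0 : i = 0
    · subst hi0
      by_cases hj : j = 0
      · exact ⟨1, by simp, by simp [bb, cc, dd, hj]⟩
      · by_cases h : g (j - k) = -1
        · exact ⟨-1, by simp, by simp [bb, cc, dd, hj, h]⟩
        · exact ⟨1, by simp, by simp [bb, cc, dd, hj, h]⟩
    by_cases hi1 : i = 1
    · subst hi1
      by_cases hj : j = 0
      · exact ⟨g (-k), hg _, by simp [bb, cc, dd, hj]⟩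
      · by_cases hjk : j = k
        · subst hjk
          exact ⟨- g (-j), by rcases hg (-j) with h | h <;> simp [h],
            by simp [bb, cc, dd, hj, h0]⟩
        · by_cases h : g (j - k) = -1
          · exact ⟨1, by simp, by simp [bb, cc, dd, hj, hjk, h]⟩
          · exact ⟨1, by simp, by simp [bb, cc, dd, hj, hjk, h]⟩
    · exact ⟨g (j - k * i), hg _, by simp [bb, cc, dd, hi0, hi1]⟩
  obtain ⟨s, hs, h⟩ := key
  rcases h with ⟨h1, h2, h3⟩ | ⟨h1, h2, h3⟩ | ⟨h1, h2, h3⟩ <;>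
    rcases hs with rfl | rfl <;> rcases he with he | he <;> rcases hf with hf | hf <;>
    simp [V, h1, h2, h3, he, hf]

theorem V_row {k : ZMod p} (hk : k ≠ 0) (x : ZMod p × Fin 2) : ∑ y, V g k x y = 0 := by
  have : ∀ j, ∑ f, V g k x (j, f) = bb g k x.1 j * (2 * sg x.2) := by
    intro j
    have h1 : sg 0 = 1 := rfl
    have h2 : sg 1 = -1 := rfl
    simp only [V, Fin.sum_univ_two, h1, h2]; ring
  rw [Fintype.sum_prod_type]
  simp_rw [this]
  rw [← Finset.sum_mul, row_b hk, zero_mul]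

theorem V_col {k : ZMod p} (y : ZMod p × Fin 2) : ∑ x, V g k x y = 0 := by
  have : ∀ i, ∑ e, V g k (i, e) y = cc g k i y.1 * (2 * sg y.2) := by
    intro i
    have h1 : sg 0 = 1 := rfl
    have h2 : sg 1 = -1 := rfl
    simp only [V, Fin.sum_univ_two, h1, h2]; ring
  rw [Fintype.sum_prod_type]
  simp_rw [this]
  rw [← Finset.sum_mul, col_c, zero_mul]

theorem V_inner (hg : ∀ x, g x = 1 ∨ g x = -1) (h0 : g 0 = 1) (hn : ∀ x, x ≠ 0 → g (-x) = - g x)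
    {k l : ZMod p} (hk : k ≠ 0) (hl : l ≠ 0) (hkl : k ≠ l) :
    ∑ x, ∑ y, V g k x y * V g l x y = 0 := by
  have h1 : ∀ x : ZMod p × Fin 2, ∑ y, V g k x y * V g l x y =
      ∑ j, ∑ f, V g k x (j, f) * V g l x (j, f) := fun x => Fintype.sum_prod_type _
  simp_rw [h1]
  rw [Fintype.sum_prod_type]
  have h2 : ∀ i, ∑ e, ∑ j, ∑ f, V g k (i, e) (j, f) * V g l (i, e) (j, f) =
      ∑ j, 4 * (bb g k i j * bb g l i j + cc g k i j * cc g l i j + dd g k i j * dd g l i j) := by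
    intro i
    rw [Finset.sum_comm]
    refine Finset.sum_congr rfl fun j _ => ?_
    simp [V, Fin.sum_univ_two, sg]; ring
  simp_rw [h2, ← Finset.mul_sum]
  rw [inner_zero hg h0 hn hk hl hkl, mul_zero]

end

/-- Turn a sign into a symbol. -/
def toF (v : ℤ) : Fin 2 := if v = 1 then 0 else 1

theorem toF_eq {v : ℤ} (hv : v = 1 ∨ v = -1) (s : Fin 2) :
    2 * (if toF v = s then (1 : ℤ) else 0) = 1 + sg s * v := by
  rcases hv with rfl | rfl <;> fin_cases s <;> simp [toF, sg]

theorem count_one {ι : Type*} [Fintype ι] (v : ι → ℤ) (hv : ∀ x, v x = 1 ∨ v x = -1)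
    (hs : ∑ x, v x = 0) (s : Fin 2) :
    ((univ : Finset ι).filter (fun x => toF (v x) = s)).card * 2 = Fintype.card ι := by
  zify
  rw [Finset.card_filter]
  push_cast
  rw [mul_comm, Finset.mul_sum]
  simp_rw [toF_eq (hv _), Finset.sum_add_distrib, ← Finset.mul_sum, hs]
  simp

theorem count_two {ι : Type*} [Fintype ι] (v w : ι → ℤ) (hv : ∀ x, v x = 1 ∨ v x = -1)
    (hw : ∀ x, w x = 1 ∨ w x = -1)
    (hs : ∑ x, v x = 0) (ht : ∑ x, w x = 0) (hvw : ∑ x, v x * w x = 0) (a b : Fin 2) :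
    ((univ : Finset ι).filter (fun x => toF (v x) = a ∧ toF (w x) = b)).card * 2 ^ 2
      = Fintype.card ι := by
  zify
  rw [Finset.card_filter]
  push_cast
  rw [mul_comm, Finset.mul_sum]
  have : ∀ x, (4 : ℤ) * (if toF (v x) = a ∧ toF (w x) = b then (1 : ℤ) else 0) =
      1 + sg a * v x + sg b * w x + sg a * sg b * (v x * w x) := by
    intro x
    have h1 := toF_eq (hv x) a
    have h2 := toF_eq (hw x) b
    have h3 : (if toF (v x) = a ∧ toF (w x) = b then (1 : ℤ) else 0) =
      (if toF (v x) = a then (1 : ℤ) else 0) * (if toF (w x) = b then (1 : ℤ) else 0) := by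
      clear h1 h2
      by_cases c1 : toF (v x) = a <;> by_cases c2 : toF (w x) = b <;> simp [c1, c2]
    rw [h3]
    linear_combination (2 * (if toF (w x) = b then (1 : ℤ) else 0)) * h1 + (1 + sg a * v x) * h2
  rw [Finset.sum_congr rfl fun x _ => this x]
  simp only [Finset.sum_add_distrib, ← Finset.mul_sum, hs, ht, hvw]
  simp

end MofsAux

/-- For every prime p ≥ 3 there is a set of p-1 mutually orthogonal binary
frequency squares of order 2p. -/
theorem binary_mofs_2p (p : ℕ) (hp : p.Prime) (h3 : 3 ≤ p) :
    ∃ F : Fin (p - 1) → Fin (2 * p) → Fin (2 * p) → Fin 2,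
      IsMOFR (2 * p) (2 * p) 2 (p - 1) F := by
  have : Fact p.Prime := ⟨hp⟩
  obtain ⟨g, hg, h0, hn⟩ := MofsAux.exists_g h3 (hp.odd_of_ne_two (by omega))
  have hcard : Fintype.card (Fin (2 * p)) = Fintype.card (ZMod p × Fin 2) := by
    simp [ZMod.card, mul_comm]
  let E : Fin (2 * p) ≃ ZMod p × Fin 2 := Fintype.equivOfCardEq hcard
  let κ : Fin (p - 1) → ZMod p := fun k => ((k.val + 1 : ℕ) : ZMod p)
  have hval : ∀ k, (κ k).val = k.val + 1 := fun k =>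
    ZMod.val_cast_of_lt (by have := k.2; omega)
  have hκ0 : ∀ k, κ k ≠ 0 := by
    intro k h
    have := hval k
    rw [h, ZMod.val_zero] at this
    omega
  have hκi : ∀ k l, k ≠ l → κ k ≠ κ l := by
    intro k l hkl h
    have h1 := hval k
    rw [h, hval l] at h1
    exact hkl (Fin.ext (by omega))
  have hrow : ∀ k i, ∑ j, MofsAux.V g (κ k) (E i) (E j) = 0 := fun k i =>
    (Equiv.sum_comp E (fun y => MofsAux.V g (κ k) (E i) y)).trans (MofsAux.V_row (hκ0 k) _)
  have hcol : ∀ k j, ∑ i, MofsAux.V g (κ k) (E i) (E j) = 0 := fun k j =>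
    (Equiv.sum_comp E (fun x => MofsAux.V g (κ k) x (E j))).trans (MofsAux.V_col _)
  have htot : ∀ k, ∑ q : Fin (2 * p) × Fin (2 * p), MofsAux.V g (κ k) (E q.1) (E q.2) = 0 := by
    intro k
    rw [Fintype.sum_prod_type]
    simp [hrow]
  refine ⟨fun k i j => MofsAux.toF (MofsAux.V g (κ k) (E i) (E j)), ?_, ?_⟩
  · intro k
    refine ⟨fun i s => ?_, fun j s => ?_⟩
    · simpa using MofsAux.count_one (fun j => MofsAux.V g (κ k) (E i) (E j))
        (fun _ => MofsAux.V_pm hg h0 _ _) (hrow k i) s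
    · simpa using MofsAux.count_one (fun i => MofsAux.V g (κ k) (E i) (E j))
        (fun _ => MofsAux.V_pm hg h0 _ _) (hcol k j) s
  · intro k l hkl a b
    have hin : ∑ q : Fin (2 * p) × Fin (2 * p),
        MofsAux.V g (κ k) (E q.1) (E q.2) * MofsAux.V g (κ l) (E q.1) (E q.2) = 0 := by
      rw [Fintype.sum_prod_type]
      have h1 : ∀ i, ∑ j, MofsAux.V g (κ k) (E i) (E j) * MofsAux.V g (κ l) (E i) (E j)
          = ∑ y, MofsAux.V g (κ k) (E i) y * MofsAux.V g (κ l) (E i) y := fun i =>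
        Equiv.sum_comp E (fun y => MofsAux.V g (κ k) (E i) y * MofsAux.V g (κ l) (E i) y)
      simp_rw [h1]
      exact (Equiv.sum_comp E (fun x => ∑ y, MofsAux.V g (κ k) x y * MofsAux.V g (κ l) x y)).trans
        (MofsAux.V_inner hg h0 hn (hκ0 k) (hκ0 l) (hκi k l hkl))
    have := MofsAux.count_two
      (fun q : Fin (2 * p) × Fin (2 * p) => MofsAux.V g (κ k) (E q.1) (E q.2))
      (fun q => MofsAux.V g (κ l) (E q.1) (E q.2))
      (fun _ => MofsAux.V_pm hg h0 _ _) (fun _ => MofsAux.V_pm hg h0 _ _)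
      (htot k) (htot l) hin a b
    rw [Fintype.card_prod, Fintype.card_fin] at this
    exact this
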